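/- Fix an integer k ≥ 416. Let G be a finite simple graph, L a 10-assignment for G, and α, β two L-colorings of G. Suppose G contains five distinct vertices v1, v2, v3, v4, w such that w is adjacent to each of v1, v2, v3, v4, the edges v1v2 and v3v4 are present, d_G(w) = 8, and d_G(v1) = d_G(v2) = d_G(v3) = d_G(v4) = 5. Let S = {v1, v2, v3, v4, w}. If there exists a k-good recoloring sequence in G − S from the restriction of α to G − S to the restriction of β to G − S, then there exists a k-good recoloring sequence in G from α to β. -/

import Mathlib

def IsLColoring {V : Type} (G : SimpleGraph V) (L : V → Finset ℕ) (φ : V → ℕ) : Prop :=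
  (∀ v, φ v ∈ L v) ∧ ∀ ⦃u w : V⦄, G.Adj u w → φ u ≠ φ w

def recolorCount {V : Type} {m : ℕ} (φ : Fin (m + 1) → V → ℕ) (v : V) : ℕ :=
  (Finset.univ.filter fun i : Fin m => φ i.castSucc v ≠ φ i.succ v).card

def IsRecolSeq {V : Type} (G : SimpleGraph V) (L : V → Finset ℕ) {m : ℕ}
    (φ : Fin (m + 1) → V → ℕ) (α β : V → ℕ) : Prop :=
  φ 0 = α ∧ φ (Fin.last m) = β ∧ (∀ i, IsLColoring G L (φ i)) ∧
    ∀ i : Fin m, ∃! v : V, φ i.castSucc v ≠ φ i.succ v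

/-!
Delete `S`, take the given recoloring of `G - S`, and put the deleted vertices back. To put back an
set `I`, replay the moves outside `I`; whenever a neighbor of `v ∈ I` is about
to take the color of `v`, first move `v` to a color that differs from the colors of its neighbors
and from the next `s + 1` colors its neighbors will receive. Each such move of `v` is thus paid for
by `s + 1` moves of its neighbors. At the end, two more moves per vertex of `I` reach `β`: one to
colors not used by `β` on `I`, one to `β`.

First `w` is put back, while its four `5`-neighbors are still deleted: four outside neighbors and
`s = 4` leave `w` with at most `(4k + 14) / 5` moves. Then the four `5`-vertices are put back
simultaneously, with `s = 3`: the moves that one of them makes are not charged to its partner, so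
each has to react only to `w` and to three outside neighbors, and four times its number of moves is
at most `3k + (4k + 14) / 5 + 11`, which is below `4k + 4` once `k ≥ 50`. -/

section Transitions

variable {V : Type} {G : SimpleGraph V} {L : V → Finset ℕ} {α β : V → ℕ} {m : ℕ}
  {φ : Fin (m + 1) → V → ℕ}

theorem recolorCount_cons (α : V → ℕ) (φ : Fin (m + 1) → V → ℕ) (v : V) :
    recolorCount (Fin.cons α φ : Fin (m + 2) → V → ℕ) v =
      (if α v ≠ φ 0 v then 1 else 0) + recolorCount φ v := by
  simp only [recolorCount, Finset.card_filter, Fin.sum_univ_succ, Fin.castSucc_zero,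
    Fin.cons_zero, Fin.cons_succ, ← Fin.succ_castSucc]

theorem isRecolSeq_cons_iff :
    IsRecolSeq G L (Fin.cons α φ : Fin (m + 2) → V → ℕ) α β ↔
      IsLColoring G L α ∧ (∃! v, α v ≠ φ 0 v) ∧ IsRecolSeq G L φ (φ 0) β := by
  simp only [IsRecolSeq, Fin.forall_fin_succ (n := m + 1), Fin.forall_fin_succ (n := m),
    Fin.castSucc_zero, Fin.cons_zero, Fin.cons_succ, ← Fin.succ_castSucc, ← Fin.succ_last,
    true_and]
  tauto

end Transitions

/-- There is a `k`-good recoloring sequence from `α` to `β`. -/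
def HasGoodRecolSeq {V : Type} (G : SimpleGraph V) (L : V → Finset ℕ) (k : ℕ)
    (α β : V → ℕ) : Prop :=
  ∃ (m : ℕ) (φ : Fin (m + 1) → V → ℕ),
    IsRecolSeq G L φ α β ∧ ∀ v, recolorCount φ v ≤ k

/-- `RecolorsVia G L φ l ψ`: performing the moves `(v, c)` of `l` in order, each giving color `c`
to vertex `v`, leads from `φ` to `ψ` through `L`-colorings of `G`. A move may repeat the color
that its vertex already has. -/
inductive RecolorsVia {V : Type} [DecidableEq V] (G : SimpleGraph V) (L : V → Finset ℕ) :
    (V → ℕ) → List (V × ℕ) → (V → ℕ) → Prop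
  | nil {φ : V → ℕ} (hφ : IsLColoring G L φ) : RecolorsVia G L φ [] φ
  | cons {φ ψ : V → ℕ} {v : V} {c : ℕ} {l : List (V × ℕ)} (hφ : IsLColoring G L φ)
      (h : RecolorsVia G L (Function.update φ v c) l ψ) : RecolorsVia G L φ ((v, c) :: l) ψ

/-- The number of moves of `l` that recolor `v`. -/
def moveCount {V : Type} [DecidableEq V] (l : List (V × ℕ)) (v : V) : ℕ :=
  (l.map Prod.fst).count v

open scoped Classical in
/-- The colors, in order, that the moves of `l` give to neighbors of `v`: the list of dangers a
recoloring strategy for `v` has to look ahead at. -/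
noncomputable def upcomingColors {V : Type} (G : SimpleGraph V) (v : V) (l : List (V × ℕ)) :
    List ℕ :=
  (l.filter fun p => G.Adj v p.1).map Prod.snd

section Coloring

variable {V : Type} {G G' : SimpleGraph V} {L : V → Finset ℕ} {φ : V → ℕ}

theorem IsLColoring.mono (hG : G' ≤ G) (hφ : IsLColoring G L φ) : IsLColoring G' L φ :=
  ⟨hφ.1, fun _ _ h => hφ.2 (hG h)⟩

theorem IsLColoring.map {W : Type} {H : SimpleGraph W} (f : W ↪ V) (hL : ∀ v, φ v ∈ L v)
    (hφ : IsLColoring H (fun u => L (f u)) (fun u => φ (f u))) :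
    IsLColoring (H.map f) L φ := by
  refine ⟨hL, fun a b hab => ?_⟩
  obtain ⟨u, v, huv, rfl, rfl⟩ := (SimpleGraph.map_adj f H a b).1 hab
  exact hφ.2 huv

theorem exists_mem_notMem_forall_adj_ne (φ : V → ℕ) {v : V} {F : Finset ℕ}
    (h : (G.neighborSet v).encard + F.card < (L v).card) :
    ∃ c ∈ L v, c ∉ F ∧ ∀ u, G.Adj v u → φ u ≠ c := by
  by_contra! hno
  have hsub : (L v : Set ℕ) ⊆ φ '' G.neighborSet v ∪ F := fun c hc => by
    by_cases hcF : c ∈ F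
    · exact Or.inr hcF
    · exact Or.inl (hno c hc hcF)
  refine h.not_ge ?_
  calc ((L v).card : ℕ∞) = (L v : Set ℕ).encard := (Set.encard_coe_eq_coe_finsetCard _).symm
    _ ≤ (φ '' G.neighborSet v).encard + (F : Set ℕ).encard :=
      (Set.encard_le_encard hsub).trans (Set.encard_union_le _ _)
    _ ≤ (G.neighborSet v).encard + F.card := by
      rw [Set.encard_coe_eq_coe_finsetCard]
      gcongr
      exact Set.encard_image_le _ _

@[simp]
theorem upcomingColors_nil (v : V) : upcomingColors G v [] = [] := rfl

theorem upcomingColors_cons_of_adj {u v : V} (h : G.Adj v u) (c : ℕ) (l : List (V × ℕ)) :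
    upcomingColors G v ((u, c) :: l) = c :: upcomingColors G v l := by
  simp [upcomingColors, h]

theorem upcomingColors_cons_of_not_adj {u v : V} (h : ¬G.Adj v u) (c : ℕ) (l : List (V × ℕ)) :
    upcomingColors G v ((u, c) :: l) = upcomingColors G v l := by
  simp [upcomingColors, h]

end Coloring

section Moves

variable {V : Type} [DecidableEq V] {G : SimpleGraph V} {L : V → Finset ℕ}
  {φ ψ χ : V → ℕ} {l l' : List (V × ℕ)}

@[simp]
theorem moveCount_nil (v : V) : moveCount [] v = 0 := rfl

theorem moveCount_cons (u : V) (c : ℕ) (l : List (V × ℕ)) (v : V) :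
    moveCount ((u, c) :: l) v = moveCount l v + if u = v then 1 else 0 := by
  simp [moveCount, List.count_cons]

theorem moveCount_append (l l' : List (V × ℕ)) (v : V) :
    moveCount (l ++ l') v = moveCount l v + moveCount l' v := by
  simp [moveCount]

theorem length_upcomingColors_le_sum {v : V} {N : Finset V}
    (hN : ∀ u, G.Adj v u → u ∉ N → moveCount l u = 0) :
    (upcomingColors G v l).length ≤ ∑ u ∈ N, moveCount l u := by
  induction l with
  | nil => simp
  | cons p l ih =>
    obtain ⟨x, c⟩ := p
    simp only [moveCount_cons, Nat.add_eq_zero_iff] at hN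
    have ih := ih fun u hu huN => (hN u hu huN).1
    simp only [moveCount_cons, Finset.sum_add_distrib, Finset.sum_ite_eq]
    by_cases hadj : G.Adj v x
    · have hx : x ∈ N := by
        by_contra hx
        simpa using (hN x hadj hx).2
      rw [upcomingColors_cons_of_adj hadj, if_pos hx]
      exact Nat.succ_le_succ ih
    · rw [upcomingColors_cons_of_not_adj hadj]
      exact ih.trans (Nat.le_add_right _ _)

theorem length_upcomingColors_le {v : V} {J : Finset V} {d k : ℕ}
    (hd : (G.neighborSet v \ J).encard ≤ d)
    (hk : ∀ u ∈ G.neighborSet v \ J, moveCount l u ≤ k) :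
    (upcomingColors G v l).length ≤ d * k + ∑ u ∈ J, moveCount l u := by
  obtain ⟨N, hN⟩ := (Set.finite_of_encard_le_coe hd).exists_finset_coe
  rw [← hN, Set.encard_coe_eq_coe_finsetCard, Nat.cast_le] at hd
  have hsum : ∑ u ∈ N, moveCount l u ≤ d * k :=
    (Finset.sum_le_card_nsmul N _ k fun u hu => hk u (hN ▸ Finset.mem_coe.2 hu)).trans
      (Nat.mul_le_mul_right k hd)
  calc (upcomingColors G v l).length
      ≤ ∑ u ∈ N ∪ J, moveCount l u := length_upcomingColors_le_sum fun u hu huNJ => by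
        rw [← Finset.mem_coe, Finset.coe_union, hN, Set.sdiff_union_self] at huNJ
        exact absurd (Or.inl hu) huNJ
    _ ≤ ∑ u ∈ N, moveCount l u + ∑ u ∈ J, moveCount l u := by
        rw [← Finset.sum_union_inter]
        exact Nat.le_add_right _ _
    _ ≤ d * k + ∑ u ∈ J, moveCount l u := Nat.add_le_add_right hsum _

theorem IsLColoring.update (hφ : IsLColoring G L φ) {v : V} {c : ℕ} (hc : c ∈ L v)
    (h : ∀ u, G.Adj v u → φ u ≠ c) : IsLColoring G L (Function.update φ v c) := by
  refine ⟨fun u => ?_, fun a b hab => ?_⟩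
  · obtain rfl | huv := eq_or_ne u v
    · rwa [Function.update_self]
    · rw [Function.update_of_ne huv]
      exact hφ.1 u
  · obtain rfl | hav := eq_or_ne a v
    · rw [Function.update_self, Function.update_of_ne hab.ne']
      exact (h b hab).symm
    · obtain rfl | hbv := eq_or_ne b v
      · rw [Function.update_self, Function.update_of_ne hav]
        exact h a hab.symm
      · rw [Function.update_of_ne hav, Function.update_of_ne hbv]
        exact hφ.2 hab

namespace RecolorsVia

theorem isLColoring_left (h : RecolorsVia G L φ l ψ) : IsLColoring G L φ := by
  cases h <;> assumption

theorem isLColoring_right (h : RecolorsVia G L φ l ψ) : IsLColoring G L ψ := by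
  induction h with
  | nil hφ => exact hφ
  | cons _ _ ih => exact ih

theorem trans (h : RecolorsVia G L φ l ψ) (h' : RecolorsVia G L ψ l' χ) :
    RecolorsVia G L φ (l ++ l') χ := by
  induction h with
  | nil _ => exact h'
  | cons hφ _ ih => exact .cons hφ (ih h')

theorem exists_isRecolSeq (h : RecolorsVia G L φ l ψ) :
    ∃ (m : ℕ) (Φ : Fin (m + 1) → V → ℕ),
      IsRecolSeq G L Φ φ ψ ∧ ∀ v, recolorCount Φ v ≤ moveCount l v := by
  induction h with
  | @nil φ hφ =>
    exact ⟨0, fun _ => φ, ⟨rfl, rfl, fun _ => hφ, fun i => i.elim0⟩, fun v => by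
      simp [recolorCount]⟩
  | @cons φ ψ x c l hφ _ ih =>
    obtain ⟨m, Φ, hΦ, hcount⟩ := ih
    obtain rfl | hc := eq_or_ne c (φ x)
    · rw [Function.update_eq_self] at hΦ
      exact ⟨m, Φ, hΦ, fun v => (hcount v).trans (by simp [moveCount_cons])⟩
    have hΦ0 : Φ 0 = Function.update φ x c := hΦ.1
    have hchange : ∀ v, φ v ≠ Φ 0 v ↔ v = x := fun v => by
      rw [hΦ0]
      obtain rfl | hv := eq_or_ne v x
      · simpa using hc.symm
      · simp [hv]
    refine ⟨m + 1, Fin.cons φ Φ, isRecolSeq_cons_iff.2 ⟨hφ, ?_, hΦ0 ▸ hΦ⟩, fun v => ?_⟩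
    · simp only [hchange, existsUnique_eq]
    · rw [recolorCount_cons, moveCount_cons, add_comm]
      simp only [hchange, eq_comm (a := v)]
      exact Nat.add_le_add_right (hcount v) _

end RecolorsVia

theorem IsRecolSeq.exists_recolorsVia {m : ℕ} {Φ : Fin (m + 1) → V → ℕ}
    (h : IsRecolSeq G L Φ φ ψ) :
    ∃ l, RecolorsVia G L φ l ψ ∧ ∀ v, moveCount l v = recolorCount Φ v := by
  induction m generalizing φ with
  | zero =>
    obtain ⟨rfl, rfl, hΦ, -⟩ := h
    exact ⟨[], .nil (hΦ 0), fun v => by simp [recolorCount]⟩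
  | succ m ih =>
    obtain ⟨φ', Φ, rfl⟩ := Fin.exists_cons Φ
    obtain rfl : φ' = φ := h.1
    obtain ⟨hφ, ⟨x, hx, hunique⟩, hΦ⟩ := isRecolSeq_cons_iff.1 h
    obtain ⟨l, hl, hcount⟩ := ih hΦ
    have hsame : ∀ v, v ≠ x → φ' v = Φ 0 v := fun v hv => by
      by_contra hne
      exact hv (hunique v hne)
    have hstep : Function.update φ' x (Φ 0 x) = Φ 0 :=
      Function.update_eq_iff.2 ⟨rfl, hsame⟩
    refine ⟨(x, Φ 0 x) :: l, .cons hφ (hstep.symm ▸ hl), fun v => ?_⟩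
    rw [recolorCount_cons, moveCount_cons, hcount, add_comm]
    obtain rfl | hv := eq_or_ne v x
    · simp [hx]
    · simp [hsame v hv, hv.symm]

theorem RecolorsVia.map {W : Type} [DecidableEq W] {H : SimpleGraph W} (f : W ↪ V)
    {φ' ψ' : W → ℕ} {l : List (W × ℕ)} (h : RecolorsVia H (fun u => L (f u)) φ' l ψ')
    (hL : ∀ v, φ v ∈ L v) (hφ : ∀ u, φ (f u) = φ' u) :
    ∃ ψ, RecolorsVia (H.map f) L φ (l.map (Prod.map f id)) ψ ∧ ∀ u, ψ (f u) = ψ' u := by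
  induction h generalizing φ with
  | nil hcol =>
    obtain rfl := funext hφ
    exact ⟨φ, .nil (hcol.map f hL), fun _ => rfl⟩
  | @cons φ' ψ' x c l hcol h ih =>
    obtain rfl := funext hφ
    have hc : c ∈ L (f x) := by simpa using h.isLColoring_left.1 x
    obtain ⟨ψ, hψ, hψ'⟩ := ih (φ := Function.update φ (f x) c)
      (fun v => by
        obtain rfl | hv := eq_or_ne v (f x)
        · rwa [Function.update_self]
        · rw [Function.update_of_ne hv]
          exact hL v)
      (fun u => Function.update_apply_of_injective φ f.injective x c u)
    exact ⟨ψ, .cons (hcol.map f hL) hψ, hψ'⟩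

theorem moveCount_map {W : Type} [DecidableEq W] (f : W ↪ V) (l : List (W × ℕ)) (u : W) :
    moveCount (l.map (Prod.map f id)) (f u) = moveCount l u := by
  rw [moveCount, moveCount, ← List.count_map_of_injective _ f f.injective, List.map_map,
    List.map_map]
  rfl

theorem moveCount_map_of_notMem_range {W : Type} (f : W → V) (l : List (W × ℕ)) {v : V}
    (hv : v ∉ Set.range f) : moveCount (l.map (Prod.map f id)) v = 0 := by
  rw [moveCount, List.count_eq_zero]
  simp only [List.map_map, List.mem_map, not_exists, not_and]
  exact fun p _ hp => hv ⟨p.1, hp⟩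

theorem HasGoodRecolSeq.exists_recolorsVia_spanningCoe {A : Set V} {k : ℕ} {α β : V → ℕ}
    (h : HasGoodRecolSeq (G.induce A) (fun u => L u) k (fun u => α u) (fun u => β u))
    (hα : ∀ v, α v ∈ L v) :
    ∃ l ψ, RecolorsVia (G.induce A).spanningCoe L α l ψ ∧ (∀ u ∈ A, ψ u = β u) ∧
      (∀ u, moveCount l u ≤ k) ∧ ∀ u ∉ A, moveCount l u = 0 := by
  obtain ⟨m, Φ, hΦ, hk⟩ := h
  obtain ⟨l, hl, hcount⟩ := hΦ.exists_recolorsVia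
  let f := Function.Embedding.subtype (· ∈ A)
  obtain ⟨ψ, hψ, hβ⟩ := hl.map f hα fun _ => rfl
  have hout : ∀ u ∉ A, moveCount (l.map (Prod.map f id)) u = 0 := fun u hu =>
    moveCount_map_of_notMem_range f l (by simpa [f] using hu)
  refine ⟨_, ψ, hψ, fun u hu => hβ ⟨u, hu⟩, fun u => ?_, hout⟩
  by_cases hu : u ∈ A
  · exact (moveCount_map f l ⟨u, hu⟩).trans_le ((hcount _).trans_le (hk _))
  · exact (hout u hu).trans_le (Nat.zero_le k)

end Moves

theorem encard_sdiff_coe_le {V : Type*} {A : Set V} {J : Finset V} {d : ℕ} (hJ : ↑J ⊆ A)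
    (hA : A.encard ≤ (d + J.card : ℕ)) : (A \ J).encard ≤ d := by
  rw [← Set.encard_sdiff_add_encard_of_subset hJ, Set.encard_coe_eq_coe_finsetCard,
    Nat.cast_add] at hA
  exact (ENat.add_le_add_iff_right (ENat.natCast_ne_top _)).1 hA

theorem spanningCoe_induce_adj {V : Type*} {G : SimpleGraph V} {A : Set V} {u v : V} :
    (G.induce A).spanningCoe.Adj u v ↔ u ∈ A ∧ v ∈ A ∧ G.Adj u v := by
  simp [and_left_comm]

section Extension

variable {V : Type} [DecidableEq V] {G G' : SimpleGraph V} {L : V → Finset ℕ}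
  {φ φ' ψ α β : V → ℕ} {l : List (V × ℕ)}

theorem IsLColoring.exists_recolorsVia_notMem (hφ : IsLColoring G L φ) (T : Finset V)
    (F : V → Finset ℕ)
    (hF : ∀ v ∈ T, (G.neighborSet v).encard + (F v).card < (L v).card) :
    ∃ l ψ, RecolorsVia G L φ l ψ ∧ (∀ v ∈ T, ψ v ∉ F v) ∧ (∀ v ∉ T, ψ v = φ v) ∧
      ∀ v, moveCount l v = if v ∈ T then 1 else 0 := by
  induction T using Finset.induction_on generalizing φ with
  | empty => exact ⟨[], φ, .nil hφ, by simp, fun _ _ => rfl, by simp⟩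
  | insert a T ha ih =>
    rw [Finset.forall_mem_insert] at hF
    obtain ⟨c, hcL, hcF, hc⟩ := exists_mem_notMem_forall_adj_ne φ hF.1
    obtain ⟨l, ψ, hl, hψF, hψ, hcount⟩ := ih (hφ.update hcL hc) hF.2
    refine ⟨(a, c) :: l, ψ, .cons hφ hl, Finset.forall_mem_insert .. |>.2 ⟨?_, hψF⟩,
      fun v hv => ?_, fun v => ?_⟩
    · rwa [hψ a ha, Function.update_self]
    · rw [Finset.mem_insert, not_or] at hv
      rw [hψ v hv.2, Function.update_of_ne hv.1]
    · rw [moveCount_cons, hcount]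
      obtain rfl | hv := eq_or_ne v a
      · simp [ha]
      · simp [hv, hv.symm]

theorem IsLColoring.exists_recolorsVia_of_forall_adj_ne (hφ : IsLColoring G L φ)
    (hβ : IsLColoring G L β) (T : Finset V) (hout : ∀ v ∉ T, φ v = β v)
    (hT : ∀ u ∈ T, ∀ v ∈ T, G.Adj v u → φ u ≠ β v) :
    ∃ l, RecolorsVia G L φ l β ∧ ∀ v, moveCount l v = if v ∈ T then 1 else 0 := by
  induction T using Finset.induction_on generalizing φ with
  | empty =>
    obtain rfl : φ = β := funext fun v => hout v (Finset.notMem_empty v)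
    exact ⟨[], .nil hφ, by simp⟩
  | insert a T ha ih =>
    have hfree : ∀ u, G.Adj a u → φ u ≠ β a := fun u hau => by
      by_cases hu : u ∈ insert a T
      · exact hT u hu a (Finset.mem_insert_self a T) hau
      · rw [hout u hu]
        exact (hβ.2 hau).symm
    obtain ⟨l, hl, hcount⟩ := ih (hφ.update (hβ.1 a) hfree)
      (fun v hv => by
        obtain rfl | hva := eq_or_ne v a
        · rw [Function.update_self]
        · rw [Function.update_of_ne hva, hout v (by simp [hva, hv])])
      (fun u hu v hv huv => by
        rw [Function.update_of_ne (ne_of_mem_of_not_mem hu ha)]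
        exact hT u (Finset.mem_insert_of_mem hu) v (Finset.mem_insert_of_mem hv) huv)
    refine ⟨(a, β a) :: l, .cons hφ hl, fun v => ?_⟩
    rw [moveCount_cons, hcount]
    obtain rfl | hv := eq_or_ne v a
    · simp [ha]
    · simp [hv, hv.symm]

theorem IsLColoring.exists_recolorsVia_of_eq_off (hφ : IsLColoring G L φ)
    (hβ : IsLColoring G L β) (I : Finset V)
    (hI : ∀ v ∈ I, (G.neighborSet v).encard + I.card < (L v).card)
    (hout : ∀ v ∉ I, φ v = β v) :
    ∃ l, RecolorsVia G L φ l β ∧ ∀ v, moveCount l v = if v ∈ I then 2 else 0 := by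
  have hF : ∀ v ∈ I, (G.neighborSet v).encard + (I.image β).card < (L v).card := fun v hv =>
    (by gcongr; exact Finset.card_image_le : _ ≤ _).trans_lt (hI v hv)
  obtain ⟨l₁, φ₁, hl₁, hφ₁F, hφ₁, hcount₁⟩ :=
    hφ.exists_recolorsVia_notMem I (fun _ => I.image β) hF
  obtain ⟨l₂, hl₂, hcount₂⟩ := hl₁.isLColoring_right.exists_recolorsVia_of_forall_adj_ne hβ I
    (fun v hv => (hφ₁ v hv).trans (hout v hv))
    (fun u hu v hv _ heq => hφ₁F u hu (heq ▸ Finset.mem_image_of_mem β hv))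
  refine ⟨l₁ ++ l₂, hl₁.trans hl₂, fun v => ?_⟩
  rw [moveCount_append, hcount₁, hcount₂]
  split_ifs <;> rfl

/- A color outside the next `s + 1` upcoming ones pays for its choice: at least `s + 1` moves pass
before it has to be given up, unless the list of moves ends first. -/
theorem budget_succ_of_notMem_take {s n c x : ℕ} {U : List ℕ}
    (hx : x ∉ (c :: U).take (s + 1)) (h : (s + 1) * n + U.idxOf x ≤ U.length + s) :
    (s + 1) * (n + 1) ≤ U.length + 1 + s := by
  have hxU : x ∉ U.take s := fun hmem => hx (by simp [hmem])
  by_cases hmem : x ∈ U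
  · have : s ≤ U.idxOf x := by rwa [List.mem_take_iff_idxOf_lt hmem, not_lt] at hxU
    rw [Nat.mul_succ]
    omega
  · rw [List.idxOf_of_notMem hmem] at h
    have hn : n = 0 := by
      by_contra hn
      have := Nat.le_mul_of_pos_right (s + 1) (Nat.pos_of_ne_zero hn)
      omega
    subst hn
    omega

theorem IsLColoring.exists_recolorsVia_free_color (hφ : IsLColoring G L φ) {I : Finset V} {s : ℕ}
    (hI : ∀ v ∈ I, (G.neighborSet v).encard + (s + 1 : ℕ) < (L v).card) (x : V) (c : ℕ)
    (l : List (V × ℕ)) :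
    ∃ l₀ χ, RecolorsVia G L φ l₀ χ ∧ (∀ v ∈ I, G.Adj v x → χ v ≠ c) ∧ (∀ v ∉ I, χ v = φ v) ∧
      (∀ v ∉ I, moveCount l₀ v = 0) ∧
      ∀ v ∈ I, ∀ n, (s + 1) * n + (upcomingColors G v l).idxOf (χ v) ≤
          (upcomingColors G v l).length + s →
        (s + 1) * (moveCount l₀ v + n) + (upcomingColors G v ((x, c) :: l)).idxOf (φ v) ≤
          (upcomingColors G v ((x, c) :: l)).length + s := by
  classical
  let C := I.filter fun v => G.Adj v x ∧ φ v = c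
  have hCI : C ⊆ I := Finset.filter_subset _ _
  obtain ⟨l₀, χ, hl₀, hχC, hχ, hcount⟩ := hφ.exists_recolorsVia_notMem C
    (fun v => ((upcomingColors G v ((x, c) :: l)).take (s + 1)).toFinset) fun v hv =>
      (by gcongr; exact (List.toFinset_card_le _).trans (List.length_take_le _ _) :
        _ ≤ _).trans_lt (hI v (hCI hv))
  have hχC' : ∀ v ∈ C, χ v ∉ (c :: upcomingColors G v l).take (s + 1) := fun v hv => by
    rw [← upcomingColors_cons_of_adj (Finset.mem_filter.1 hv).2.1, ← List.mem_toFinset]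
    exact hχC v hv
  have hφc : ∀ v ∈ I, v ∉ C → G.Adj v x → φ v ≠ c := fun v hv hvC hadj hc =>
    hvC (Finset.mem_filter.2 ⟨hv, hadj, hc⟩)
  refine ⟨l₀, χ, hl₀, fun v hv hadj => ?_, fun v hv => hχ v fun hvC => hv (hCI hvC),
    fun v hv => (hcount v).trans (if_neg fun hvC => hv (hCI hvC)), fun v hv n hbudget => ?_⟩
  · by_cases hvC : v ∈ C
    · exact fun hc => hχC' v hvC (by simp [hc])
    · exact (hχ v hvC).trans_ne (hφc v hv hvC hadj)
  rw [hcount]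
  by_cases hvC : v ∈ C
  · obtain ⟨-, hadj, hvc⟩ := Finset.mem_filter.1 hvC
    rw [if_pos hvC, upcomingColors_cons_of_adj hadj, hvc, List.idxOf_cons_self,
      List.length_cons, add_comm 1]
    exact budget_succ_of_notMem_take (hχC' v hvC) hbudget
  · rw [hχ v hvC] at hbudget
    rw [if_neg hvC, zero_add]
    by_cases hadj : G.Adj v x
    · rw [upcomingColors_cons_of_adj hadj, List.idxOf_cons_ne _ (hφc v hv hvC hadj).symm,
        List.length_cons]
      omega
    · rwa [upcomingColors_cons_of_not_adj hadj]

theorem RecolorsVia.exists_lookahead_extension {I : Finset V} {s : ℕ}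
    (hG : ∀ ⦃u v⦄, u ∉ I → v ∉ I → G.Adj u v → G'.Adj u v)
    (hI : ∀ v ∈ I, (G.neighborSet v).encard + (s + 1 : ℕ) < (L v).card)
    (h : RecolorsVia G' L φ l ψ) (hl : ∀ v ∈ I, moveCount l v = 0)
    (hφ' : IsLColoring G L φ') (heq : ∀ v ∉ I, φ' v = φ v) :
    ∃ l' ψ', RecolorsVia G L φ' l' ψ' ∧ (∀ v ∉ I, ψ' v = ψ v) ∧
      (∀ v ∉ I, moveCount l' v = moveCount l v) ∧
      ∀ v ∈ I, (s + 1) * moveCount l' v + (upcomingColors G v l).idxOf (φ' v) ≤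
        (upcomingColors G v l).length + s := by
  induction h generalizing φ' with
  | nil _ => exact ⟨[], φ', .nil hφ', heq, fun _ _ => rfl, by simp⟩
  | @cons φ ψ x c l _ h ih =>
    simp only [moveCount_cons, Nat.add_eq_zero_iff] at hl
    have hxI : x ∉ I := fun hx => by simpa using (hl x hx).2
    obtain ⟨l₀, χ, hl₀, hχc, hχφ', hcount₀, hbudget₀⟩ :=
      hφ'.exists_recolorsVia_free_color hI x c l
    have hχφ : ∀ v ∉ I, χ v = φ v := fun v hv => (hχφ' v hv).trans (heq v hv)
    have hfree : ∀ v, G.Adj x v → χ v ≠ c := fun v hxv => by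
      by_cases hvI : v ∈ I
      · exact hχc v hvI hxv.symm
      · have hne := h.isLColoring_left.2 (hG hxI hvI hxv)
        rw [Function.update_self, Function.update_of_ne hxv.ne'] at hne
        exact (hχφ v hvI).trans_ne hne.symm
    have hc : c ∈ L x := by simpa using h.isLColoring_left.1 x
    have hχ := hl₀.isLColoring_right
    obtain ⟨l', ψ', hl', hψ', hcount, hbudget⟩ := ih (fun v hv => (hl v hv).1)
      (hχ.update hc hfree) fun v hv => by simp only [Function.update_apply, hχφ v hv]
    refine ⟨l₀ ++ (x, c) :: l', ψ', hl₀.trans (.cons hχ hl'), hψ', fun v hv => ?_,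
      fun v hv => ?_⟩
    · rw [moveCount_append, moveCount_cons, moveCount_cons, hcount₀ v hv, hcount v hv, zero_add]
    · have hvx : v ≠ x := ne_of_mem_of_not_mem hv hxI
      rw [moveCount_append, moveCount_cons, if_neg hvx.symm, add_zero]
      refine hbudget₀ v hv _ ?_
      simpa only [Function.update_of_ne hvx] using hbudget v hv

theorem RecolorsVia.exists_extension {I : Finset V} {d s : ℕ}
    (hG : ∀ ⦃u v⦄, u ∉ I → v ∉ I → G.Adj u v → G'.Adj u v)
    (hd : ∀ v ∈ I, (G.neighborSet v).encard ≤ d)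
    (hL : ∀ v ∈ I, d + max (s + 1) I.card < (L v).card)
    (hα : IsLColoring G L α) (hβ : IsLColoring G L β)
    (h : RecolorsVia G' L α l ψ) (hl : ∀ v ∈ I, moveCount l v = 0) (hψ : ∀ v ∉ I, ψ v = β v) :
    ∃ l', RecolorsVia G L α l' β ∧ (∀ v ∉ I, moveCount l' v = moveCount l v) ∧
      ∀ v ∈ I, (s + 1) * moveCount l' v ≤ (upcomingColors G v l).length + s + (s + 1) * 2 := by
  have hroom : ∀ n ≤ max (s + 1) I.card, ∀ v ∈ I,
      (G.neighborSet v).encard + (n : ℕ) < (L v).card := fun n hn v hv =>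
    (add_le_add_left (hd v hv) _).trans_lt
      (by exact_mod_cast (Nat.add_le_add_left hn d).trans_lt (hL v hv))
  obtain ⟨l₁, ψ₁, hl₁, hψ₁, hcount₁, hbudget⟩ :=
    h.exists_lookahead_extension hG (hroom _ (le_max_left _ _)) hl hα fun _ _ => rfl
  obtain ⟨l₂, hl₂, hcount₂⟩ := hl₁.isLColoring_right.exists_recolorsVia_of_eq_off hβ I
    (hroom _ (le_max_right _ _)) fun v hv => (hψ₁ v hv).trans (hψ v hv)
  refine ⟨l₁ ++ l₂, hl₁.trans hl₂, fun v hv => ?_, fun v hv => ?_⟩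
  · rw [moveCount_append, hcount₁ v hv, hcount₂, if_neg hv, add_zero]
  · rw [moveCount_append, hcount₂, if_pos hv, mul_add]
    exact Nat.add_le_add_right ((Nat.le_add_right _ _).trans (hbudget v hv)) _

theorem IsLColoring.piecewise_spanningCoe_compl (hβ : IsLColoring G L β) (hψ : ∀ v, ψ v ∈ L v)
    (T : Finset V) : IsLColoring (G.induce (T : Set V)ᶜ).spanningCoe L (T.piecewise ψ β) := by
  refine ⟨fun v => ?_, fun u v huv => ?_⟩
  · by_cases hv : v ∈ T
    · simpa [hv] using hψ v
    · simpa [hv] using hβ.1 v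
  · obtain ⟨hu, hv, hadj⟩ := spanningCoe_induce_adj.1 huv
    rw [Finset.piecewise_eq_of_notMem _ _ _ hu, Finset.piecewise_eq_of_notMem _ _ _ hv]
    exact hβ.2 hadj

theorem HasGoodRecolSeq.exists_recolorsVia_add_vertex {w : V} {T : Finset V} {k d s : ℕ}
    (h : HasGoodRecolSeq (G.induce (insert w (T : Set V))ᶜ) (fun u => L u) k
      (fun u => α u) (fun u => β u))
    (hα : IsLColoring G L α) (hβ : IsLColoring G L β) (hw : w ∉ T)
    (hd : (G.neighborSet w \ T).encard ≤ d) (hL : d + (s + 1) < (L w).card) :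
    ∃ l ψ, RecolorsVia (G.induce (T : Set V)ᶜ).spanningCoe L α l ψ ∧ (∀ v ∉ T, ψ v = β v) ∧
      (∀ v ∈ T, moveCount l v = 0) ∧ (∀ v ≠ w, moveCount l v ≤ k) ∧
      (s + 1) * moveCount l w ≤ d * k + s + (s + 1) * 2 := by
  obtain ⟨l₀, ψ₀, hl₀, hψ₀, hk, hout⟩ := h.exists_recolorsVia_spanningCoe hα.1
  let G₁ := (G.induce (T : Set V)ᶜ).spanningCoe
  have hd₁ : (G₁.neighborSet w).encard ≤ d :=
    (Set.encard_le_encard fun u hu => (spanningCoe_induce_adj.1 hu).2.symm).trans hd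
  have hG : ∀ ⦃u v⦄, u ∉ ({w} : Finset V) → v ∉ ({w} : Finset V) → G₁.Adj u v →
      (G.induce (insert w (T : Set V))ᶜ).spanningCoe.Adj u v := fun u v hu hv huv => by
    obtain ⟨huT, hvT, hadj⟩ := spanningCoe_induce_adj.1 huv
    refine spanningCoe_induce_adj.2 ⟨?_, ?_, hadj⟩ <;> simp_all
  obtain ⟨l, hl, hcount, hbudget⟩ := hl₀.exists_extension (s := s) hG
    (by simpa using hd₁) (by simpa using hL) (hα.mono (G.spanningCoe_induce_le _))
    (hβ.piecewise_spanningCoe_compl hl₀.isLColoring_right.1 T) (by simp [hout])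
    fun v hv => by
      by_cases hvT : v ∈ T
      · simp [hvT]
      · simpa [hvT] using hψ₀ v (by simp_all)
  have hcount' : ∀ v ≠ w, moveCount l v = moveCount l₀ v := by simpa using hcount
  have hlength : (upcomingColors G₁ w l₀).length ≤ d * k := by
    simpa using length_upcomingColors_le (J := ∅) (by simpa using hd₁) fun u _ => hk u
  refine ⟨l, _, hl, fun v hv => Finset.piecewise_eq_of_notMem _ _ _ hv, fun v hv => ?_,
    fun v hv => (hcount' v hv).trans_le (hk v), ?_⟩
  · rw [hcount' v (ne_of_mem_of_not_mem hv hw)]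
    exact hout v (by simp [hv])
  · have := hbudget w (Finset.mem_singleton_self w)
    omega

end Extension

theorem stmt_12_general {V : Type} {G : SimpleGraph V} {L : V → Finset ℕ} {α β : V → ℕ} {k : ℕ}
    (hk : 50 ≤ k) (hα : IsLColoring G L α) (hβ : IsLColoring G L β) {w : V} {T : Finset V}
    (hL : ∀ v ∈ insert w (T : Set V), 10 ≤ (L v).card) (hT : T.card = 4)
    (hwT : ∀ v ∈ T, G.Adj w v) (hTT : ∀ v ∈ T, ∃ u ∈ T, G.Adj v u)
    (hw : (G.neighborSet w).encard ≤ 8) (hd : ∀ v ∈ T, (G.neighborSet v).encard ≤ 5)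
    (hrec : HasGoodRecolSeq (G.induce (insert w (T : Set V))ᶜ) (fun u => L u) k
      (fun u => α u) (fun u => β u)) :
    HasGoodRecolSeq G L k α β := by
  classical
  have hw_notMem : w ∉ T := fun hmem => (hwT w hmem).ne rfl
  have hdw : (G.neighborSet w \ T).encard ≤ (4 : ℕ) :=
    encard_sdiff_coe_le hwT (by rw [hT]; exact hw)
  obtain ⟨l₁, ψ, hl₁, hψ, hl₁T, hk₁, hl₁w⟩ := hrec.exists_recolorsVia_add_vertex (s := 4) hα hβ
    hw_notMem hdw (hL w (.inl rfl))
  obtain ⟨l₂, hl₂, hcount, hbudget⟩ := hl₁.exists_extension (s := 3)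
    (fun u v hu hv h => spanningCoe_induce_adj.2 ⟨hu, hv, h⟩) hd
    (fun v hv => by rw [hT]; exact hL v (.inr hv)) hα hβ hl₁T hψ
  obtain ⟨m, Φ, hΦ, hΦk⟩ := hl₂.exists_isRecolSeq
  refine ⟨m, Φ, hΦ, fun v => (hΦk v).trans ?_⟩
  by_cases hv : v ∈ T
  · obtain ⟨u, huT, hvu⟩ := hTT v hv
    have hwu : w ≠ u := (ne_of_mem_of_not_mem huT hw_notMem).symm
    have hdv : (G.neighborSet v \ ({w, u} : Finset V)).encard ≤ (3 : ℕ) :=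
      encard_sdiff_coe_le (by simp [Set.insert_subset_iff, (hwT v hv).symm, hvu])
        (by rw [Finset.card_pair hwu]; exact hd v hv)
    have hlength := length_upcomingColors_le (l := l₁) (k := k) hdv fun x hx =>
      hk₁ x fun hxw => hx.2 (by simp [hxw])
    rw [Finset.sum_pair hwu, hl₁T u huT] at hlength
    have := hbudget v hv
    lia
  · rw [hcount v hv]
    obtain rfl | hvw := eq_or_ne v w
    · lia
    · exact hk₁ v hvw

/-- an 8-vertex with two pairs of adjacent 5-neighbors: if `G` contains this configuration and `G − S` has a
`k`-good recoloring sequence between the restrictions of `α` and `β` (`k ≥ 416`),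
then `G` has a `k`-good recoloring sequence from `α` to `β`. -/
theorem stmt_12 {V : Type} [Fintype V] [DecidableEq V]
    (G : SimpleGraph V) [DecidableRel G.Adj]
    (k : ℕ) (hk : 416 ≤ k)
    (L : V → Finset ℕ) (hL : ∀ u, (L u).card = 10)
    (α β : V → ℕ) (hα : IsLColoring G L α) (hβ : IsLColoring G L β)
    (v1 v2 v3 v4 w : V) (hnodup : ([v1, v2, v3, v4, w] : List V).Nodup)
    (he1: G.Adj w v1)
    (he2: G.Adj w v2)
    (he3: G.Adj w v3)
    (he4: G.Adj w v4)
    (he5: G.Adj v1 v2)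
    (he6: G.Adj v3 v4)
    (hdv1 : G.degree v1 = 5)
    (hdv2 : G.degree v2 = 5)
    (hdv3 : G.degree v3 = 5)
    (hdv4 : G.degree v4 = 5)
    (hdw : G.degree w = 8)
    (S : Set V) (hS : S = {v1, v2, v3, v4, w})
    (hrec : ∃ (m : ℕ) (φ : Fin (m + 1) → ↥(Sᶜ) → ℕ),
      IsRecolSeq (G.induce Sᶜ) (fun u => L u.1) φ (fun u => α u.1) (fun u => β u.1) ∧
      ∀ u : ↥(Sᶜ), recolorCount φ u ≤ k) :
    ∃ (M : ℕ) (ψ : Fin (M + 1) → V → ℕ),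
      IsRecolSeq G L ψ α β ∧ ∀ u : V, recolorCount ψ u ≤ k := by
  have hS' : S = insert w (({v1, v2, v3, v4} : Finset V) : Set V) := by
    rw [hS]
    ext u
    simp only [Finset.coe_insert, Finset.coe_singleton, Set.mem_insert_iff, Set.mem_singleton_iff]
    tauto
  subst hS'
  have hencard : ∀ v, (G.neighborSet v).encard = G.degree v := fun v => by
    rw [← G.card_neighborSet_eq_degree, Set.encard_eq_coe_toFinset_card, Set.toFinset_card]
  refine stmt_12_general (by lia) hα hβ (fun v _ => (hL v).ge) ?_ ?_ ?_ ?_ ?_ hrec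
  · simp_all
  · simp [he1, he2, he3, he4]
  · simp [he5, he5.symm, he6, he6.symm]
  · simp [hencard, hdw]
  · simp [hencard, hdv1, hdv2, hdv3, hdv4]
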